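/- arXiv:1705.08074 — 2 statements merged into one kernel-verified Lean document; each statement's English description precedes it below -/
import Mathlib

section
/- Assume 3 ≤ a ≤ b and t ≥ p. Let x* = ((2p−5) − √((2p−5)² − 24))/12 and y* = p − (p+2)/p + 2((2a+2b−5)/p − 2)x* + (η − (16p−14a−14b+20)/p)x*². Then: (i) q_s(x*) ≤ y* for every block array s, with equality if and only if s ∈ Q₀ ∪ Q₁ ∪ Q₂ ∪ Q₃ ∪ Q₄; and (ii) for every real x ≠ x*, max_{s∈S} q_s(x) > y*. -/
open Matrix

namespace TwoDim

/-- The set of plots of an `a × b` block. -/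
abbrev Plot (a b : ℕ) := Fin a × Fin b

/-- A block array: an assignment of one of `t` treatments to each plot. -/
abbrev BlockArray (a b t : ℕ) := Plot a b → Fin t

/-- The all-ones matrix. -/
def Jmat (n : Type*) : Matrix n n ℝ := Matrix.of fun _ _ => 1

/-- `B_m = I - J/m`. -/
noncomputable def Bmat (n : Type*) [Fintype n] [DecidableEq n] : Matrix n n ℝ :=
  1 - ((Fintype.card n : ℝ))⁻¹ • Jmat n

variable {a b t : ℕ}

/-- The treatment incidence matrix `T_s`. -/
def Tmat (s : BlockArray a b t) : Matrix (Plot a b) (Fin t) ℝ :=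
  Matrix.of fun q k => if s q = k then 1 else 0

/-- Two plots are neighbors if they agree in one coordinate and differ by 1 in the other. -/
def Neighbor (q r : Plot a b) : Prop :=
  (q.1 = r.1 ∧ (q.2.val + 1 = r.2.val ∨ r.2.val + 1 = q.2.val)) ∨
  (q.2 = r.2 ∧ (q.1.val + 1 = r.1.val ∨ r.1.val + 1 = q.1.val))

instance (q r : Plot a b) : Decidable (Neighbor q r) := by
  unfold Neighbor; infer_instance

/-- The adjacency matrix of the neighbor relation. -/
def Mmat (a b : ℕ) : Matrix (Plot a b) (Plot a b) ℝ :=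
  Matrix.of fun q r => if Neighbor q r then 1 else 0

/-- `F_s = M T_s`. -/
def Fmat (s : BlockArray a b t) : Matrix (Plot a b) (Fin t) ℝ :=
  Mmat a b * Tmat s

/-- `B̃ = Σ⁻¹ − Σ⁻¹ J Σ⁻¹ / (1'Σ⁻¹1)`. -/
noncomputable def Btilde (Sig : Matrix (Plot a b) (Plot a b) ℝ) :
    Matrix (Plot a b) (Plot a b) ℝ :=
  Sig⁻¹ - (∑ i, ∑ j, Sig⁻¹ i j)⁻¹ • (Sig⁻¹ * Jmat (Plot a b) * Sig⁻¹)

/-- `C_{s00} = T_s' W T_s` (with `W` playing the role of `B̃`). -/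
def Cs00 (W : Matrix (Plot a b) (Plot a b) ℝ) (s : BlockArray a b t) :
    Matrix (Fin t) (Fin t) ℝ := (Tmat s)ᵀ * W * Tmat s

/-- `C_{s01} = T_s' W F_s`. -/
def Cs01 (W : Matrix (Plot a b) (Plot a b) ℝ) (s : BlockArray a b t) :
    Matrix (Fin t) (Fin t) ℝ := (Tmat s)ᵀ * W * Fmat s

/-- `C_{s11} = F_s' W F_s`. -/
def Cs11 (W : Matrix (Plot a b) (Plot a b) ℝ) (s : BlockArray a b t) :
    Matrix (Fin t) (Fin t) ℝ := (Fmat s)ᵀ * W * Fmat s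

/-- `c_{s00} = tr(B_t C_{s00})`. -/
noncomputable def cs00 (W : Matrix (Plot a b) (Plot a b) ℝ) (s : BlockArray a b t) : ℝ :=
  Matrix.trace (Bmat (Fin t) * Cs00 W s)

noncomputable def cs01 (W : Matrix (Plot a b) (Plot a b) ℝ) (s : BlockArray a b t) : ℝ :=
  Matrix.trace (Bmat (Fin t) * Cs01 W s)

noncomputable def cs11 (W : Matrix (Plot a b) (Plot a b) ℝ) (s : BlockArray a b t) : ℝ :=
  Matrix.trace (Bmat (Fin t) * Cs11 W s)

/-- The quadratic `q_s(x) = c_{s00} + 2 c_{s01} x + c_{s11} x²`. -/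
noncomputable def qpoly (W : Matrix (Plot a b) (Plot a b) ℝ) (s : BlockArray a b t) (x : ℝ) : ℝ :=
  cs00 W s + 2 * cs01 W s * x + cs11 W s * x ^ 2

/-- A measure on the set of block arrays: nonnegative weights summing to one. -/
def IsMeasure (ξ : BlockArray a b t → ℝ) : Prop :=
  (∀ s, 0 ≤ ξ s) ∧ ∑ s, ξ s = 1

noncomputable def Cm00 (W : Matrix (Plot a b) (Plot a b) ℝ) (ξ : BlockArray a b t → ℝ) :
    Matrix (Fin t) (Fin t) ℝ := ∑ s, ξ s • Cs00 W s

noncomputable def Cm01 (W : Matrix (Plot a b) (Plot a b) ℝ) (ξ : BlockArray a b t → ℝ) :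
    Matrix (Fin t) (Fin t) ℝ := ∑ s, ξ s • Cs01 W s

noncomputable def Cm11 (W : Matrix (Plot a b) (Plot a b) ℝ) (ξ : BlockArray a b t → ℝ) :
    Matrix (Fin t) (Fin t) ℝ := ∑ s, ξ s • Cs11 W s

noncomputable def cm00 (W : Matrix (Plot a b) (Plot a b) ℝ) (ξ : BlockArray a b t → ℝ) : ℝ :=
  ∑ s, ξ s * cs00 W s

noncomputable def cm01 (W : Matrix (Plot a b) (Plot a b) ℝ) (ξ : BlockArray a b t → ℝ) : ℝ :=
  ∑ s, ξ s * cs01 W s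

noncomputable def cm11 (W : Matrix (Plot a b) (Plot a b) ℝ) (ξ : BlockArray a b t → ℝ) : ℝ :=
  ∑ s, ξ s * cs11 W s

/-- `q*_ξ = c_{ξ00} − c_{ξ01}²/c_{ξ11}`. -/
noncomputable def qstar (W : Matrix (Plot a b) (Plot a b) ℝ) (ξ : BlockArray a b t → ℝ) : ℝ :=
  cm00 W ξ - (cm01 W ξ) ^ 2 / cm11 W ξ

/-- `G` is a generalized inverse of `A`. -/
def IsGenInv (A G : Matrix (Fin t) (Fin t) ℝ) : Prop := A * G * A = A

/-- Information matrix `C_{ξ00} − C_{ξ01} G C_{ξ10}` computed with a generalized inverse `G`. -/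
noncomputable def InfoMat (W : Matrix (Plot a b) (Plot a b) ℝ) (ξ : BlockArray a b t → ℝ)
    (G : Matrix (Fin t) (Fin t) ℝ) : Matrix (Fin t) (Fin t) ℝ :=
  Cm00 W ξ - Cm01 W ξ * G * (Cm01 W ξ)ᵀ

/-- A criterion `Φ` on `t×t` real symmetric matrices: concave, Loewner-nondecreasing, and
invariant under simultaneous permutations of rows and columns. -/
def GoodPhi (t : ℕ) (Φ : Matrix (Fin t) (Fin t) ℝ → ℝ) : Prop :=
  (∀ A B : Matrix (Fin t) (Fin t) ℝ, A.IsSymm → B.IsSymm → ∀ α : ℝ, 0 ≤ α → α ≤ 1 →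
      α * Φ A + (1 - α) * Φ B ≤ Φ (α • A + (1 - α) • B)) ∧
  (∀ A B : Matrix (Fin t) (Fin t) ℝ, A.IsSymm → B.IsSymm → (B - A).PosSemidef → Φ A ≤ Φ B) ∧
  (∀ (σ : Equiv.Perm (Fin t)) (C : Matrix (Fin t) (Fin t) ℝ), Φ (C.submatrix σ σ) = Φ C)

/-- Universal optimality of a measure `ξ`. -/
def UnivOptimal (W : Matrix (Plot a b) (Plot a b) ℝ) (ξ : BlockArray a b t → ℝ) : Prop :=
  ∀ η : BlockArray a b t → ℝ, IsMeasure η →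
    ∀ G H : Matrix (Fin t) (Fin t) ℝ, IsGenInv (Cm11 W ξ) G → IsGenInv (Cm11 W η) H →
      ∀ Φ : Matrix (Fin t) (Fin t) ℝ → ℝ, GoodPhi t Φ →
        Φ (InfoMat W η H) ≤ Φ (InfoMat W ξ G)

/-- A measure is symmetric if it is invariant under relabeling of the treatments. -/
def IsSymmetricMeasure (ξ : BlockArray a b t → ℝ) : Prop :=
  ∀ (σ : Equiv.Perm (Fin t)) (s : BlockArray a b t), ξ (fun q => σ (s q)) = ξ s

/-- A matrix is completely symmetric if it is of the form `αI + βJ`. -/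
def ComplSym (A : Matrix (Fin t) (Fin t) ℝ) : Prop :=
  ∃ α β : ℝ, A = α • (1 : Matrix (Fin t) (Fin t) ℝ) + β • Jmat (Fin t)

/-- A measure is pseudo symmetric if `C_{ξ00}`, `C_{ξ01}`, `C_{ξ11}` are completely symmetric. -/
def PseudoSym (W : Matrix (Plot a b) (Plot a b) ℝ) (ξ : BlockArray a b t → ℝ) : Prop :=
  ComplSym (Cm00 W ξ) ∧ ComplSym (Cm01 W ξ) ∧ ComplSym (Cm11 W ξ)

/-- `r(x) = max_{s∈S} q_s(x)`. -/
noncomputable def rfun {a b : ℕ} (t : ℕ) (W : Matrix (Plot a b) (Plot a b) ℝ) (x : ℝ) : ℝ :=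
  sSup (Set.range fun s : BlockArray a b t => qpoly W s x)

/-- `min_{s∈S} q_s(x)`. -/
noncomputable def rmin {a b : ℕ} (t : ℕ) (W : Matrix (Plot a b) (Plot a b) ℝ) (x : ℝ) : ℝ :=
  sInf (Set.range fun s : BlockArray a b t => qpoly W s x)

/-- Number of plots assigned treatment `k` by `s`. -/
noncomputable def f0 (s : BlockArray a b t) (k : Fin t) : ℕ :=
  {q : Plot a b | s q = k}.ncard

/-- Replications of `k` among the columns `1,…,b−1`. -/
noncomputable def f1 (s : BlockArray a b t) (k : Fin t) : ℕ :=
  {q : Plot a b | s q = k ∧ q.2.val + 1 < b}.ncard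

/-- Replications of `k` among the columns `2,…,b`. -/
noncomputable def f2 (s : BlockArray a b t) (k : Fin t) : ℕ :=
  {q : Plot a b | s q = k ∧ 1 ≤ q.2.val}.ncard

/-- Replications of `k` among the rows `1,…,a−1`. -/
noncomputable def f3 (s : BlockArray a b t) (k : Fin t) : ℕ :=
  {q : Plot a b | s q = k ∧ q.1.val + 1 < a}.ncard

/-- Replications of `k` among the rows `2,…,a`. -/
noncomputable def f4 (s : BlockArray a b t) (k : Fin t) : ℕ :=
  {q : Plot a b | s q = k ∧ 1 ≤ q.1.val}.ncard

noncomputable def fc (s : BlockArray a b t) : ℕ → Fin t → ℕ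
  | 0 => f0 s
  | 1 => f1 s
  | 2 => f2 s
  | 3 => f3 s
  | 4 => f4 s
  | _ => fun _ => 0

/-- `h^{uv}_s = Σ_k f^u_{s,k} f^v_{s,k}`. -/
noncomputable def hval (s : BlockArray a b t) (u v : ℕ) : ℝ :=
  ∑ k : Fin t, (fc s u k : ℝ) * (fc s v k : ℝ)

noncomputable def h00 (s : BlockArray a b t) : ℝ := hval s 0 0

noncomputable def h1 (s : BlockArray a b t) : ℝ :=
  hval s 0 1 + hval s 0 2 + hval s 0 3 + hval s 0 4

noncomputable def h2 (s : BlockArray a b t) : ℝ :=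
  hval s 1 1 + hval s 2 2 + hval s 3 3 + hval s 4 4

noncomputable def h3 (s : BlockArray a b t) : ℝ :=
  hval s 1 2 + hval s 1 3 + hval s 1 4 + hval s 2 3 + hval s 2 4 + hval s 3 4

/-- `z¹_{s,r}`: horizontally adjacent pairs of plots receiving the same treatment. -/
noncomputable def zr1 (s : BlockArray a b t) : ℕ :=
  {qr : Plot a b × Plot a b |
    qr.1.1 = qr.2.1 ∧ qr.1.2.val + 1 = qr.2.2.val ∧ s qr.1 = s qr.2}.ncard

noncomputable def zr2 (s : BlockArray a b t) : ℕ :=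
  {qr : Plot a b × Plot a b |
    qr.1.1 = qr.2.1 ∧ qr.1.2.val + 2 = qr.2.2.val ∧ s qr.1 = s qr.2}.ncard

noncomputable def zc1 (s : BlockArray a b t) : ℕ :=
  {qr : Plot a b × Plot a b |
    qr.1.2 = qr.2.2 ∧ qr.1.1.val + 1 = qr.2.1.val ∧ s qr.1 = s qr.2}.ncard

noncomputable def zc2 (s : BlockArray a b t) : ℕ :=
  {qr : Plot a b × Plot a b |
    qr.1.2 = qr.2.2 ∧ qr.1.1.val + 2 = qr.2.1.val ∧ s qr.1 = s qr.2}.ncard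

/-- pairs `(i,j)`, `(i−1,j+1)` with the same treatment. -/
noncomputable def zd1 (s : BlockArray a b t) : ℕ :=
  {qr : Plot a b × Plot a b |
    qr.2.1.val + 1 = qr.1.1.val ∧ qr.1.2.val + 1 = qr.2.2.val ∧ s qr.1 = s qr.2}.ncard

/-- pairs `(i,j)`, `(i+1,j+1)` with the same treatment. -/
noncomputable def zd2 (s : BlockArray a b t) : ℕ :=
  {qr : Plot a b × Plot a b |
    qr.1.1.val + 1 = qr.2.1.val ∧ qr.1.2.val + 1 = qr.2.2.val ∧ s qr.1 = s qr.2}.ncard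

noncomputable def z1 (s : BlockArray a b t) : ℝ := 2 * zr1 s + 2 * zc1 s

noncomputable def z2 (s : BlockArray a b t) : ℝ :=
  2 * zr2 s + 2 * zc2 s + 4 * zd1 s + 4 * zd2 s

/-- `η = 4p − 2a − 2b − 2(8ab − 7a − 7b + 4)/t + 4(2p − a − b)²/(pt)` where `p = ab`. -/
noncomputable def eta (a b t : ℕ) : ℝ :=
  4 * ((a : ℝ) * b) - 2 * a - 2 * b - 2 * (8 * (a : ℝ) * b - 7 * a - 7 * b + 4) / t +
    4 * (2 * (a : ℝ) * b - a - b) ^ 2 / (((a : ℝ) * b) * t)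

/-- A corner plot of the `a × b` block. -/
def IsCorner (q : Plot a b) : Prop :=
  (q.1.val = 0 ∨ q.1.val + 1 = a) ∧ (q.2.val = 0 ∨ q.2.val + 1 = b)

/-- Treatment `k` is significant in `s`: it occupies exactly two plots, which are
neighbors, at least one of them being a corner plot. -/
def Significant (s : BlockArray a b t) (k : Fin t) : Prop :=
  ∃ u v : Plot a b, u ≠ v ∧ {q : Plot a b | s q = k} = {u, v} ∧
    Neighbor u v ∧ (IsCorner u ∨ IsCorner v)

/-- Treatment `k` is strictly significant in `s`: both of its two plots are corners. -/
def StrictSignificant (s : BlockArray a b t) (k : Fin t) : Prop :=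
  ∃ u v : Plot a b, u ≠ v ∧ {q : Plot a b | s q = k} = {u, v} ∧
    Neighbor u v ∧ IsCorner u ∧ IsCorner v

/-- `Q_i`: block arrays with exactly `i` significant treatments in which every other
treatment appears at most once. -/
def Qset (a b t : ℕ) (i : ℕ) : Set (BlockArray a b t) :=
  {s | {k : Fin t | Significant s k}.ncard = i ∧
       ∀ k : Fin t, ¬ Significant s k → f0 s k ≤ 1}

/-- `Q_j*`: members of `Q_j` whose significant treatments are all strictly significant. -/
def QsetStar (a b t : ℕ) (j : ℕ) : Set (BlockArray a b t) :=
  {s | s ∈ Qset a b t j ∧ ∀ k : Fin t, Significant s k → StrictSignificant s k}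

/-- Treatment `k` is connected in `s`. -/
def ConnectedIn (s : BlockArray a b t) (k : Fin t) : Prop :=
  ∀ q r : Plot a b, s q = k → s r = k →
    Relation.ReflTransGen (fun u v => Neighbor u v ∧ s u = k ∧ s v = k) q r


/-! ### Helper lemmas -/

lemma trace_form {t : ℕ} {P : Type*} [Fintype P] [DecidableEq P] (X Y : Matrix P (Fin t) ℝ) :
    Matrix.trace (Bmat (Fin t) * (Xᵀ * Bmat P * Y)) =
      (∑ k, ∑ q, X q k * Y q k) - (Fintype.card P : ℝ)⁻¹ * ∑ k, (∑ q, X q k) * (∑ q, Y q k)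
      - (t : ℝ)⁻¹ * ((∑ q, (∑ k, X q k) * (∑ k, Y q k))
          - (Fintype.card P : ℝ)⁻¹ * ((∑ q, ∑ k, X q k) * (∑ q, ∑ k, Y q k))) := by
  have hJ : ∀ k l, (Xᵀ * Jmat P * Y) k l = (∑ q, X q k) * (∑ q, Y q l) := by
    intro k l
    simp [Matrix.mul_apply, Jmat, Finset.mul_sum]
  have hC : ∀ k l, (Xᵀ * Bmat P * Y) k l =
      (∑ q, X q k * Y q l) - (Fintype.card P : ℝ)⁻¹ * ((∑ q, X q k) * (∑ q, Y q l)) := by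
    intro k l
    rw [← hJ]
    rw [Bmat, Matrix.mul_sub, Matrix.sub_mul, Matrix.mul_smul, Matrix.smul_mul, Matrix.mul_one]
    simp only [Matrix.sub_apply, Matrix.smul_apply, smul_eq_mul]
    rw [Matrix.mul_apply]
    simp
  have hB : ∀ C : Matrix (Fin t) (Fin t) ℝ, Matrix.trace (Bmat (Fin t) * C) =
      (∑ k, C k k) - (t : ℝ)⁻¹ * ∑ k, ∑ l, C l k := by
    intro C
    simp [Bmat, Matrix.sub_mul, Matrix.trace, Matrix.mul_apply, Jmat, Finset.mul_sum]
  rw [hB]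
  simp only [hC, Finset.sum_sub_distrib]
  have e1 : ∑ k, ∑ l, ∑ q, X q l * Y q k = ∑ q, (∑ k, X q k) * (∑ k, Y q k) := by
    simp only [Finset.sum_mul_sum]
    rw [Finset.sum_comm]
    rw [Finset.sum_congr rfl (fun k _ => Finset.sum_comm)]
    rw [Finset.sum_comm]
  have e2 : ∑ k, ∑ l, (Fintype.card P : ℝ)⁻¹ * ((∑ q, X q l) * (∑ q, Y q k)) =
      (Fintype.card P : ℝ)⁻¹ * ((∑ q, ∑ k, X q k) * (∑ q, ∑ k, Y q k)) := by
    simp only [← Finset.mul_sum, ← Finset.sum_mul]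
    rw [Finset.sum_comm (f := fun q k => X q k), Finset.sum_comm (f := fun q k => Y q k)]
  rw [e1, e2, ← Finset.mul_sum]

/-- degree of a plot -/
noncomputable def dg (q : Plot a b) : ℝ := ∑ r, Mmat a b q r

/-- number of common neighbors -/
noncomputable def cn (q r : Plot a b) : ℝ := ∑ u, Mmat a b u q * Mmat a b u r

lemma Neighbor_symm (q r : Plot a b) : Neighbor q r ↔ Neighbor r q := by
  unfold Neighbor
  constructor <;> (rintro (⟨h, h'⟩ | ⟨h, h'⟩) <;> simp [h, h'.symm])

lemma M_symm (q r : Plot a b) : Mmat a b q r = Mmat a b r q := by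
  simp only [Mmat, Matrix.of_apply, Neighbor_symm q r]

lemma sum_ite_mul (s : BlockArray a b t) (f g : Plot a b → ℝ) :
    ∑ k, (∑ q, f q * (if s q = k then (1:ℝ) else 0)) * (∑ q, g q * (if s q = k then (1:ℝ) else 0))
      = ∑ q, ∑ r, (if s q = s r then f q * g r else 0) := by
  simp only [Finset.sum_mul_sum]
  rw [Finset.sum_comm]
  refine Finset.sum_congr rfl fun q _ => ?_
  rw [Finset.sum_comm]
  refine Finset.sum_congr rfl fun r _ => ?_
  simp only [mul_ite, mul_one, mul_zero, ite_mul, zero_mul]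
  rw [Finset.sum_ite_eq]
  simp

lemma F_apply (s : BlockArray a b t) (q : Plot a b) (k : Fin t) :
    Fmat s q k = ∑ r, Mmat a b q r * (if s r = k then (1:ℝ) else 0) := by
  simp [Fmat, Matrix.mul_apply, Tmat]

lemma sumF_k (s : BlockArray a b t) (q : Plot a b) : ∑ k, Fmat s q k = dg q := by
  simp only [F_apply]
  rw [Finset.sum_comm]
  simp [dg]

lemma sumF_q (s : BlockArray a b t) (k : Fin t) :
    ∑ q, Fmat s q k = ∑ r, dg r * (if s r = k then (1:ℝ) else 0) := by
  simp only [F_apply]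
  rw [Finset.sum_comm]
  simp only [← Finset.sum_mul, dg]
  refine Finset.sum_congr rfl fun q _ => ?_
  simp only [M_symm q]

lemma sumT_q (s : BlockArray a b t) (k : Fin t) :
    ∑ q, Tmat s q k = ∑ r, (1:ℝ) * (if s r = k then (1:ℝ) else 0) := by
  simp [Tmat]

lemma sumT_k (s : BlockArray a b t) (q : Plot a b) : ∑ k, Tmat s q k = 1 := by
  simp [Tmat]

lemma qpoly_formula (s : BlockArray a b t) (x : ℝ) :
    qpoly (Bmat (Plot a b)) s x =
      (∑ q, ∑ r, if s q = s r then
        ((if q = r then (1:ℝ) else 0) + 2 * x * Mmat a b q r + x ^ 2 * cn q r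
          - ((a : ℝ) * b)⁻¹ * ((1 + x * dg q) * (1 + x * dg r))) else 0)
      - (t : ℝ)⁻¹ * ((∑ q : Plot a b, (1 + x * dg q) ^ 2)
          - ((a : ℝ) * b)⁻¹ * (∑ q : Plot a b, (1 + x * dg q)) ^ 2) := by
  have hc : (Fintype.card (Plot a b) : ℝ) = (a : ℝ) * b := by simp [Plot]
  have h00 : cs00 (Bmat (Plot a b)) s = _ := trace_form (Tmat s) (Tmat s)
  have h01 : cs01 (Bmat (Plot a b)) s = _ := trace_form (Tmat s) (Fmat s)
  have h11 : cs11 (Bmat (Plot a b)) s = _ := trace_form (Fmat s) (Fmat s)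
  have g00 : ∑ k, ∑ q, Tmat s q k * Tmat s q k =
      ∑ q, ∑ r, if s q = s r then (if q = r then (1:ℝ) else 0) else 0 := by
    rw [Finset.sum_comm]
    refine Finset.sum_congr rfl fun q _ => ?_
    rw [Finset.sum_eq_single q]
    · simp [Tmat]
    · intro r _ h; simp [h.symm]
    · simp
  have g01 : ∑ k, ∑ q, Tmat s q k * Fmat s q k =
      ∑ q, ∑ r, if s q = s r then Mmat a b q r else 0 := by
    rw [Finset.sum_comm]
    refine Finset.sum_congr rfl fun q _ => ?_
    simp only [Tmat, Matrix.of_apply, ite_mul, one_mul, zero_mul, Finset.sum_ite_eq,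
      Finset.mem_univ, if_true, F_apply]
    refine Finset.sum_congr rfl fun r _ => ?_
    simp [eq_comm]
  have g11 : ∑ k, ∑ q, Fmat s q k * Fmat s q k =
      ∑ q, ∑ r, if s q = s r then cn q r else 0 := by
    rw [Finset.sum_comm]
    simp only [F_apply]
    simp only [sum_ite_mul]
    rw [Finset.sum_comm]
    refine Finset.sum_congr rfl fun q _ => ?_
    rw [Finset.sum_comm]
    refine Finset.sum_congr rfl fun r _ => ?_
    by_cases h : s q = s r <;> simp [h, cn]
  rw [g00] at h00
  rw [g01] at h01
  rw [g11] at h11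
  simp only [sumT_k, sumT_q, sumF_k, sumF_q, sum_ite_mul, hc] at h00 h01 h11
  have key : ∀ q r : Plot a b, (if s q = s r then
        ((if q = r then (1:ℝ) else 0) + 2 * x * Mmat a b q r + x ^ 2 * cn q r
          - ((a : ℝ) * b)⁻¹ * ((1 + x * dg q) * (1 + x * dg r))) else 0) =
      (if s q = s r then (if q = r then (1:ℝ) else 0) else 0)
      + 2 * x * (if s q = s r then Mmat a b q r else 0)
      + x ^ 2 * (if s q = s r then cn q r else 0)
      - ((a : ℝ) * b)⁻¹ * ((if s q = s r then (1:ℝ) * 1 else 0)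
        + x * (if s q = s r then 1 * dg r else 0)
        + x * (if s q = s r then dg q * 1 else 0)
        + x ^ 2 * (if s q = s r then dg q * dg r else 0)) := by
    intro q r
    by_cases h : s q = s r
    · simp only [h, if_true]; ring
    · simp [h]
  have hsym : ∑ q : Plot a b, ∑ r, (if s q = s r then dg q * 1 else 0) =
      ∑ q, ∑ r, (if s q = s r then 1 * dg r else 0) := by
    rw [Finset.sum_comm]
    refine Finset.sum_congr rfl fun q _ => Finset.sum_congr rfl fun r _ => ?_
    simp [eq_comm]
  have hw2 : ∑ q : Plot a b, (1 + x * dg q) ^ 2 =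
      (∑ q : Plot a b, (1:ℝ) * 1) + 2 * x * (∑ q : Plot a b, 1 * dg q) + x ^ 2 * ∑ q : Plot a b, dg q * dg q := by
    simp only [Finset.mul_sum, ← Finset.sum_add_distrib]
    exact Finset.sum_congr rfl fun q _ => by ring
  have hw1 : ∑ q : Plot a b, (1 + x * dg q) =
      (∑ q : Plot a b, (1:ℝ)) + x * (∑ q : Plot a b, dg q) := by
    simp only [Finset.mul_sum, ← Finset.sum_add_distrib]
  simp only [key, Finset.sum_add_distrib, Finset.sum_sub_distrib, ← Finset.mul_sum]
  rw [hsym, hw2]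
  unfold qpoly
  rw [h00, h01, h11]
  ring

/-- one-dimensional degree -/
noncomputable def nd {n : ℕ} (i : Fin n) : ℝ :=
  (if i.val + 1 < n then 1 else 0) + (if 0 < i.val then 1 else 0)

/-- one-dimensional adjacency -/
noncomputable def ad {n : ℕ} (i j : Fin n) : ℝ :=
  (if i.val + 1 = j.val then 1 else 0) + (if j.val + 1 = i.val then 1 else 0)

lemma sum_ad {n : ℕ} (i : Fin n) : ∑ j, ad i j = nd i := by
  unfold ad nd
  rw [Finset.sum_add_distrib]
  congr 1
  · by_cases h : i.val + 1 < n
    · rw [Finset.sum_eq_single ⟨i.val + 1, h⟩]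
      · simp [h]
      · intro j _ hj
        rw [if_neg]
        intro h'
        exact hj (Fin.ext h'.symm)
      · simp
    · rw [if_neg h]
      refine Finset.sum_eq_zero fun j _ => if_neg ?_
      have := j.isLt
      omega
  · by_cases h : 0 < i.val
    · rw [Finset.sum_eq_single ⟨i.val - 1, by omega⟩]
      · rw [if_pos h, if_pos]
        show i.val - 1 + 1 = i.val
        omega
      · intro j _ hj
        rw [if_neg]
        intro h'
        refine hj (Fin.ext ?_)
        show j.val = i.val - 1
        omega
      · simp
    · rw [if_neg h]
      refine Finset.sum_eq_zero fun j _ => if_neg ?_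
      omega

lemma M_eq (q r : Plot a b) : Mmat a b q r =
    (if q.1 = r.1 then ad q.2 r.2 else 0) + (if q.2 = r.2 then ad q.1 r.1 else 0) := by
  obtain ⟨i, j⟩ := q
  obtain ⟨i', j'⟩ := r
  simp only [Mmat, Neighbor, Matrix.of_apply, ad, Fin.ext_iff]
  split_ifs <;> first | omega | norm_num

lemma dg_eq (q : Plot a b) : dg q = nd q.1 + nd q.2 := by
  unfold dg
  simp only [M_eq, Finset.sum_add_distrib, Fintype.sum_prod_type]
  rw [← sum_ad, ← sum_ad]
  rw [add_comm]
  congr 1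
  · refine Finset.sum_congr rfl fun i _ => ?_
    simp
  · rw [Finset.sum_comm]
    refine Finset.sum_congr rfl fun i _ => ?_
    simp

lemma nd_cast {n : ℕ} (i : Fin (n+2)) : nd i = 2 - (if i.val = 0 then 1 else 0) - (if i.val = n + 1 then 1 else 0) := by
  have := i.isLt
  unfold nd
  split_ifs <;> first | omega | norm_num

lemma sum_nd {n : ℕ} (hn : 2 ≤ n) : ∑ i : Fin n, nd i = 2 * n - 2 := by
  obtain ⟨m, rfl⟩ : ∃ m, n = m + 2 := ⟨n - 2, by omega⟩
  rw [Fin.sum_univ_castSucc, Fin.sum_univ_succ]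
  have : ∀ i : Fin m, nd (Fin.castSucc i.succ : Fin (m+2)) = 2 := by
    intro i
    have := i.isLt
    simp [nd]; norm_num
  simp only [this]
  simp [nd]
  ring

lemma sum_nd_sq {n : ℕ} (hn : 2 ≤ n) : ∑ i : Fin n, nd i ^ 2 = 4 * n - 6 := by
  obtain ⟨m, rfl⟩ : ∃ m, n = m + 2 := ⟨n - 2, by omega⟩
  rw [Fin.sum_univ_castSucc, Fin.sum_univ_succ]
  have : ∀ i : Fin m, nd (Fin.castSucc i.succ : Fin (m+2)) = 2 := by
    intro i
    have := i.isLt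
    simp [nd]; norm_num
  simp only [this]
  simp [nd]
  ring

lemma sum_dg (ha : 2 ≤ a) (hb : 2 ≤ b) : ∑ q : Plot a b, dg q = 4 * ((a:ℝ) * b) - 2 * a - 2 * b := by
  simp only [dg_eq, Fintype.sum_prod_type, Finset.sum_add_distrib, sum_nd hb]
  simp only [Finset.sum_const, Finset.card_univ, Fintype.card_fin, nsmul_eq_mul, ← Finset.mul_sum,
    sum_nd ha]
  ring

lemma sum_dg_sq (ha : 2 ≤ a) (hb : 2 ≤ b) :
    ∑ q : Plot a b, dg q ^ 2 = 16 * ((a:ℝ) * b) - 14 * a - 14 * b + 8 := by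
  have : ∀ q : Plot a b, dg q ^ 2 = nd q.1 ^ 2 + 2 * (nd q.1 * nd q.2) + nd q.2 ^ 2 := by
    intro q; rw [dg_eq]; ring
  simp only [this, Fintype.sum_prod_type, Finset.sum_add_distrib, ← Finset.mul_sum, sum_nd hb,
    sum_nd_sq hb, ← Finset.sum_mul, sum_nd ha]
  simp only [Finset.sum_const, Finset.card_univ, Fintype.card_fin, nsmul_eq_mul, ← Finset.mul_sum,
    sum_nd_sq ha]
  ring

lemma M_sq (q r : Plot a b) : Mmat a b q r * Mmat a b q r = Mmat a b q r := by
  simp [Mmat]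

lemma M_self (q : Plot a b) : Mmat a b q q = 0 := by
  simp [Mmat, Neighbor]

lemma cn_self (q : Plot a b) : cn q q = dg q := by
  unfold cn dg
  refine Finset.sum_congr rfl fun r _ => ?_
  rw [M_sq, M_symm]

lemma M_nonneg (q r : Plot a b) : 0 ≤ Mmat a b q r := by
  simp only [Mmat, Matrix.of_apply]; split_ifs <;> norm_num

lemma M_le_one (q r : Plot a b) : Mmat a b q r ≤ 1 := by
  simp only [Mmat, Matrix.of_apply]; split_ifs <;> norm_num

lemma cn_le (q r : Plot a b) : cn q r ≤ dg q := by
  unfold cn dg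
  refine Finset.sum_le_sum fun u _ => ?_
  rw [M_symm q u]
  have := M_nonneg u q
  have := M_le_one u r
  nlinarith

lemma cn_neighbor (q r : Plot a b) (h : Neighbor q r) : cn q r = 0 := by
  unfold cn
  refine Finset.sum_eq_zero fun u _ => ?_
  simp only [Mmat, Matrix.of_apply]
  by_cases h1 : Neighbor u q
  · by_cases h2 : Neighbor u r
    · exfalso
      unfold Neighbor at h h1 h2
      simp only [Fin.ext_iff] at h h1 h2
      omega
    · simp [h2]
  · simp [h1]

lemma dg_ge (ha : 2 ≤ a) (hb : 2 ≤ b) (q : Plot a b) : 2 ≤ dg q := by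
  rw [dg_eq, nd, nd]
  split_ifs <;> first | omega | norm_num

lemma dg_le (q : Plot a b) : dg q ≤ 4 := by
  rw [dg_eq, nd, nd]
  split_ifs <;> norm_num

lemma dg_ge_three (ha : 2 ≤ a) (hb : 2 ≤ b) (q : Plot a b) (h : ¬ IsCorner q) : 3 ≤ dg q := by
  rw [dg_eq, nd, nd]
  unfold IsCorner at h
  have := q.1.isLt
  have := q.2.isLt
  split_ifs <;> first | omega | norm_num

lemma dg_corner (ha : 2 ≤ a) (hb : 2 ≤ b) (q : Plot a b) (h : IsCorner q) : dg q = 2 := by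
  rw [dg_eq, nd, nd]
  unfold IsCorner at h
  split_ifs <;> first | omega | norm_num

lemma dg_corner_neighbor (ha : 3 ≤ a) (hb : 3 ≤ b) (q r : Plot a b) (h : IsCorner q)
    (hn : Neighbor q r) : dg r = 3 := by
  rw [dg_eq, nd, nd]
  unfold IsCorner at h
  unfold Neighbor at hn
  simp only [Fin.ext_iff] at hn
  have := q.1.isLt
  have := q.2.isLt
  have := r.1.isLt
  have := r.2.isLt
  split_ifs <;> first | omega | norm_num

/-- contribution of an ordered pair of plots with the same treatment -/
noncomputable def KK (x : ℝ) (q r : Plot a b) : ℝ :=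
  2 * x * Mmat a b q r + x ^ 2 * cn q r
    - ((a : ℝ) * b)⁻¹ * ((1 + x * dg q) * (1 + x * dg r))

/-- value for binary arrays -/
noncomputable def qbin (a b t : ℕ) (x : ℝ) : ℝ :=
  ((a : ℝ) * b) - 1 - 2 * x * (4 * ((a:ℝ) * b) - 2 * a - 2 * b) / ((a : ℝ) * b)
    + x ^ 2 * (eta a b t - (16 * ((a:ℝ) * b) - 14 * a - 14 * b + 8) / ((a : ℝ) * b))

lemma qpoly_eq (ha : 2 ≤ a) (hb : 2 ≤ b) (ht : a * b ≤ t) (s : BlockArray a b t) (x : ℝ) :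
    qpoly (Bmat (Plot a b)) s x = qbin a b t x +
      ∑ q, ∑ r, if q ≠ r ∧ s q = s r then KK x q r else 0 := by
  rw [qpoly_formula]
  have key : ∀ q r : Plot a b, (if s q = s r then
        ((if q = r then (1:ℝ) else 0) + 2 * x * Mmat a b q r + x ^ 2 * cn q r
          - ((a : ℝ) * b)⁻¹ * ((1 + x * dg q) * (1 + x * dg r))) else 0) =
      (if q = r then (1 + x ^ 2 * dg q - ((a : ℝ) * b)⁻¹ * (1 + x * dg q) ^ 2) else 0) +
      if q ≠ r ∧ s q = s r then KK x q r else 0 := by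
    intro q r
    by_cases h : q = r
    · subst h
      simp only [ne_eq, not_true_eq_false, false_and, if_false, if_true, M_self, cn_self]; ring
    · by_cases h' : s q = s r
      · simp only [h, h', KK, ne_eq, not_false_eq_true, and_self, if_true, if_false]; ring
      · simp [h, h']
  have hw2 : ∑ q : Plot a b, (1 + x * dg q) ^ 2 =
      (a:ℝ) * b + 2 * x * (4 * ((a:ℝ) * b) - 2 * a - 2 * b)
      + x ^ 2 * (16 * ((a:ℝ) * b) - 14 * a - 14 * b + 8) := by
    rw [← sum_dg ha hb, ← sum_dg_sq ha hb]
    have : (a : ℝ) * b = ∑ q : Plot a b, (1:ℝ) := by simp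
    rw [this]
    simp only [Finset.mul_sum, ← Finset.sum_add_distrib]
    exact Finset.sum_congr rfl fun q _ => by ring
  have hw1 : ∑ q : Plot a b, (1 + x * dg q) =
      (a:ℝ) * b + x * (4 * ((a:ℝ) * b) - 2 * a - 2 * b) := by
    rw [← sum_dg ha hb]
    have : (a : ℝ) * b = ∑ q : Plot a b, (1:ℝ) := by simp
    rw [this]
    simp only [Finset.mul_sum, ← Finset.sum_add_distrib]
  have hd : ∑ q : Plot a b, (1 + x ^ 2 * dg q - ((a : ℝ) * b)⁻¹ * (1 + x * dg q) ^ 2) =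
      (a:ℝ) * b + x ^ 2 * (4 * ((a:ℝ) * b) - 2 * a - 2 * b) - ((a : ℝ) * b)⁻¹ *
      ((a:ℝ) * b + 2 * x * (4 * ((a:ℝ) * b) - 2 * a - 2 * b)
      + x ^ 2 * (16 * ((a:ℝ) * b) - 14 * a - 14 * b + 8)) := by
    rw [Finset.sum_sub_distrib, ← Finset.mul_sum, hw2, Finset.sum_add_distrib, ← Finset.mul_sum,
      sum_dg ha hb]
    simp
  rw [hw1, hw2]
  simp only [key, Finset.sum_add_distrib, Finset.sum_ite_eq, Finset.mem_univ, if_true]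
  rw [hd]
  have hp : (0:ℝ) < a := by exact_mod_cast (by omega)
  have hp' : (0:ℝ) < b := by exact_mod_cast (by omega)
  have ht' : (0:ℝ) < t := by
    have : 0 < a * b := by positivity
    exact_mod_cast (by omega)
  unfold qbin eta
  field_simp
  ring

lemma xstar_facts (P x : ℝ) (hP : 9 ≤ P)
    (hx : x = ((2 * P - 5) - Real.sqrt ((2 * P - 5) ^ 2 - 24)) / 12) :
    0 < x ∧ x * P < 1 ∧ 6 * x ^ 2 - (2 * P - 5) * x + 1 = 0 := by
  have hD : 0 ≤ (2 * P - 5) ^ 2 - 24 := by nlinarith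
  have hR0 := Real.sqrt_nonneg ((2 * P - 5) ^ 2 - 24)
  have hR2 := Real.sq_sqrt hD
  set R := Real.sqrt ((2 * P - 5) ^ 2 - 24)
  have hR1 : R < 2 * P - 5 := by nlinarith
  have hR3 : 2 * P - 6 < R := by nlinarith
  have hR : R = 2 * P - 5 - 12 * x := by rw [hx]; ring
  rw [hR] at hR1 hR2 hR3
  have h1 : 0 < x := by linarith
  have h2 : x < 1 / 12 := by linarith
  have h3 : 6 * x ^ 2 - (2 * P - 5) * x + 1 = 0 := by nlinarith
  refine ⟨h1, ?_, h3⟩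
  nlinarith [mul_pos h1 (by linarith : (0:ℝ) < P - 5 - 6 * x)]

lemma KK_zero (ha : 3 ≤ a) (hb : 3 ≤ b) (x : ℝ) (q r : Plot a b)
    (hn : Neighbor q r) (hc : IsCorner q ∨ IsCorner r) :
    KK x q r = 2 * x - ((a : ℝ) * b)⁻¹ * ((1 + 2 * x) * (1 + 3 * x)) := by
  have hM : Mmat a b q r = 1 := by simp [Mmat, hn]
  unfold KK
  rw [hM, cn_neighbor q r hn]
  rcases hc with hc | hc
  · rw [dg_corner (by omega) (by omega) q hc, dg_corner_neighbor ha hb q r hc hn]; ring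
  · rw [dg_corner (by omega) (by omega) r hc,
      dg_corner_neighbor ha hb r q hc ((Neighbor_symm q r).1 hn)]; ring

lemma kappa_zero (P x : ℝ) (hP : 9 ≤ P) (h : 6 * x ^ 2 - (2 * P - 5) * x + 1 = 0) :
    2 * x - P⁻¹ * ((1 + 2 * x) * (1 + 3 * x)) = 0 := by
  have : P ≠ 0 := by linarith
  field_simp
  linarith

lemma KK_neg (ha : 3 ≤ a) (hb : 3 ≤ b) (hP : 9 ≤ (a:ℝ) * b) (x : ℝ) (hx0 : 0 < x)
    (hx1 : x * ((a:ℝ) * b) < 1)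
    (hx2 : 6 * x ^ 2 - (2 * ((a:ℝ) * b) - 5) * x + 1 = 0) (q r : Plot a b)
    (h : ¬ (Neighbor q r ∧ (IsCorner q ∨ IsCorner r))) : KK x q r < 0 := by
  have hPi : 0 < ((a:ℝ) * b)⁻¹ := by positivity
  have hP1 : ((a:ℝ) * b)⁻¹ * ((a:ℝ) * b) = 1 := inv_mul_cancel₀ (by positivity)
  have hq := dg_ge (by omega) (by omega) q
  have hr := dg_ge (by omega) (by omega) r
  have hq4 := dg_le q
  have hcn := cn_le q r
  by_cases hn : Neighbor q r
  · have hc : ¬ IsCorner q ∧ ¬ IsCorner r := by tauto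
    have hq3 := dg_ge_three (by omega) (by omega) q hc.1
    have hr3 := dg_ge_three (by omega) (by omega) r hc.2
    have hM : Mmat a b q r = 1 := by simp [Mmat, hn]
    unfold KK
    rw [hM, cn_neighbor q r hn]
    have h1 : (1 + x * 3) * (1 + x * 3) ≤ (1 + x * dg q) * (1 + x * dg r) := by gcongr
    have h2 : (1 + 2 * x) * (1 + 3 * x) < (1 + x * dg q) * (1 + x * dg r) := by nlinarith
    have h3 := mul_lt_mul_of_pos_left h2 hPi
    have h4 := kappa_zero _ x hP hx2
    linarith
  · have hM : Mmat a b q r = 0 := by simp [Mmat, hn]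
    unfold KK
    rw [hM]
    have h1 : (1 + x * 2) * (1 + x * 2) ≤ (1 + x * dg q) * (1 + x * dg r) := by gcongr
    have h2 : x ^ 2 * cn q r ≤ x ^ 2 * 4 := by
      gcongr; linarith
    have h3 : x ^ 2 * 4 * ((a:ℝ) * b) < (1 + x * dg q) * (1 + x * dg r) := by nlinarith
    have h4 := mul_lt_mul_of_pos_left h3 hPi
    have h5 : ((a:ℝ) * b)⁻¹ * (x ^ 2 * 4 * ((a:ℝ) * b)) = x ^ 2 * 4 := by
      rw [mul_comm (x ^ 2 * 4), ← mul_assoc, hP1, one_mul]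
    linarith

lemma mem_Q_iff (ha : 3 ≤ a) (hb : 3 ≤ b) (s : BlockArray a b t) :
    (s ∈ Qset a b t 0 ∪ Qset a b t 1 ∪ Qset a b t 2 ∪ Qset a b t 3 ∪ Qset a b t 4) ↔
      ∀ q r, q ≠ r → s q = s r → (Neighbor q r ∧ (IsCorner q ∨ IsCorner r)) := by
  constructor
  · intro h q r hqr hs
    have h' : ∀ k : Fin t, ¬ Significant s k → f0 s k ≤ 1 := by
      rcases h with (((h | h) | h) | h) | h <;> exact h.2
    have hsig : Significant s (s q) := by
      by_contra hns
      have := h' _ hns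
      have h2 : 1 < f0 s (s q) := by
        unfold f0
        rw [Set.one_lt_ncard (Set.toFinite _)]
        exact ⟨q, rfl, r, hs.symm, hqr⟩
      omega
    obtain ⟨u, v, huv, hset, hn, hc⟩ := hsig
    have hq : q ∈ ({u, v} : Set (Plot a b)) := by rw [← hset]; rfl
    have hr : r ∈ ({u, v} : Set (Plot a b)) := by rw [← hset]; exact hs.symm
    rcases hq with rfl | rfl <;> rcases hr with rfl | rfl
    · exact absurd rfl hqr
    · exact ⟨hn, hc⟩
    · exact ⟨(Neighbor_symm _ _).1 hn, hc.symm⟩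
    · exact absurd rfl hqr
  · intro h
    have h' : ∀ k : Fin t, ¬ Significant s k → f0 s k ≤ 1 := by
      intro k hns
      by_contra hlt
      have h2 : 1 < f0 s k := by omega
      unfold f0 at h2
      rw [Set.one_lt_ncard (Set.toFinite _)] at h2
      obtain ⟨u, hu, v, hv, huv⟩ := h2
      have hu' : s u = k := hu
      have hv' : s v = k := hv
      have huv' := h u v huv (hu'.trans hv'.symm)
      refine hns ⟨u, v, huv, ?_, huv'.1, huv'.2⟩
      ext w
      constructor
      · intro hw
        have hw' : s w = k := hw
        by_contra hne
        have hne' : u ≠ w ∧ v ≠ w := by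
          constructor
          · rintro rfl; exact hne (Or.inl rfl)
          · rintro rfl; exact hne (Or.inr rfl)
        have n1 := (h u w hne'.1 (hu'.trans hw'.symm)).1
        have n2 := (h v w hne'.2 (hv'.trans hw'.symm)).1
        have n3 := huv'.1
        unfold Neighbor at n1 n2 n3
        simp only [Fin.ext_iff] at n1 n2 n3
        omega
      · rintro (rfl | rfl)
        · exact hu
        · exact hv
    have hle : {k : Fin t | Significant s k}.ncard ≤ 4 := by
      let z : Plot a b := (⟨0, by omega⟩, ⟨0, by omega⟩)
      let C : Finset (Plot a b) := {(⟨0, by omega⟩, ⟨0, by omega⟩), (⟨0, by omega⟩, ⟨b - 1, by omega⟩),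
        (⟨a - 1, by omega⟩, ⟨0, by omega⟩), (⟨a - 1, by omega⟩, ⟨b - 1, by omega⟩)}
      have hC : ∀ q : Plot a b, IsCorner q → q ∈ C := by
        intro q hq
        unfold IsCorner at hq
        simp only [C, Finset.mem_insert, Finset.mem_singleton, Prod.ext_iff, Fin.ext_iff]
        omega
      have hsub : {k : Fin t | Significant s k} ⊆ ((C.image s : Finset (Fin t)) : Set (Fin t)) := by
        rintro k ⟨u, v, huv, hset, hn, hc⟩
        have hu : s u = k := by
          have : u ∈ {q | s q = k} := by rw [hset]; exact Or.inl rfl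
          exact this
        have hv : s v = k := by
          have : v ∈ {q | s q = k} := by rw [hset]; exact Or.inr rfl
          exact this
        simp only [Finset.coe_image, Set.mem_image, Finset.mem_coe]
        rcases hc with hc | hc
        · exact ⟨u, hC u hc, hu⟩
        · exact ⟨v, hC v hc, hv⟩
      calc _ ≤ ((C.image s : Finset (Fin t)) : Set (Fin t)).ncard := Set.ncard_le_ncard hsub (Set.toFinite _)
        _ = (C.image s).card := Set.ncard_coe_finset _
        _ ≤ C.card := Finset.card_image_le
        _ ≤ 4 := Finset.card_le_four
    simp only [Set.mem_union, Qset, Set.mem_ofPred_eq]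
    generalize {k : Fin t | Significant s k}.ncard = n at hle
    have : n = 0 ∨ n = 1 ∨ n = 2 ∨ n = 3 ∨ n = 4 := by omega
    tauto

/-- coefficient of the quadratic term -/
lemma c11_bounds (ha : 3 ≤ a) (hb : 3 ≤ b) (ht : a * b ≤ t) :
    24 / ((a:ℝ) * b) ≤ eta a b t - (16 * ((a:ℝ) * b) - 14 * a - 14 * b + 8) / ((a : ℝ) * b) ∧
    eta a b t - (16 * ((a:ℝ) * b) - 14 * a - 14 * b + 8) / ((a : ℝ) * b) ≤
      4 * ((a:ℝ) * b) - 2 * a - 2 * b ∧ 0 < 4 * ((a:ℝ) * b) - 2 * a - 2 * b := by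
  have ha' : (3:ℝ) ≤ a := by exact_mod_cast ha
  have hb' : (3:ℝ) ≤ b := by exact_mod_cast hb
  have ht' : (a:ℝ) * b ≤ t := by exact_mod_cast ht
  have hP : (9:ℝ) ≤ (a:ℝ) * b := by nlinarith
  have ht0 : (0:ℝ) < t := by linarith
  set V : ℝ := ((b:ℝ) ^ 2 * (2 * a - 4) + (a:ℝ) ^ 2 * (2 * b - 4)) / ((a:ℝ) * b) with hV
  have hV0 : 0 ≤ V := by
    refine div_nonneg (add_nonneg (mul_nonneg (sq_nonneg _) (by linarith))
      (mul_nonneg (sq_nonneg _) (by linarith))) (by linarith)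
  have hVe : V = (16 * ((a:ℝ) * b) - 14 * a - 14 * b + 8)
      - (4 * ((a:ℝ) * b) - 2 * a - 2 * b) ^ 2 / ((a:ℝ) * b) := by
    rw [hV]; field_simp; ring
  have he : eta a b t = 4 * ((a:ℝ) * b) - 2 * a - 2 * b - V / t := by
    rw [hVe]; unfold eta; field_simp; ring
  have hVt : V / t ≤ V / ((a:ℝ) * b) := div_le_div_of_nonneg_left hV0 (by linarith) ht'
  have hVt0 : 0 ≤ V / t := by positivity
  have hσ : 3 * ((a:ℝ) + b) ≤ 2 * ((a:ℝ) * b) := by nlinarith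
  have hN0 : 0 ≤ (16 * ((a:ℝ) * b) - 14 * a - 14 * b + 8) / ((a : ℝ) * b) :=
    div_nonneg (by linarith) (by linarith)
  have hVle : V / ((a:ℝ) * b) ≤ (16 * ((a:ℝ) * b) - 14 * a - 14 * b + 8) / ((a:ℝ) * b) := by
    gcongr
    rw [hVe]
    have : 0 ≤ (4 * ((a:ℝ) * b) - 2 * a - 2 * b) ^ 2 / ((a:ℝ) * b) := by positivity
    linarith
  have hmain : 24 / ((a:ℝ) * b) + 2 * ((16 * ((a:ℝ) * b) - 14 * a - 14 * b + 8) / ((a:ℝ) * b)) ≤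
      4 * ((a:ℝ) * b) - 2 * a - 2 * b := by
    rw [← mul_div_assoc, ← add_div, div_le_iff₀ (by linarith)]
    generalize (a:ℝ) * b = P at *
    nlinarith
  refine ⟨by linarith, by linarith, by linarith⟩

lemma exists_two (ha : 3 ≤ a) (hb : 3 ≤ b) (ht : a * b ≤ t) :
    ∃ s : BlockArray a b t, ∀ x : ℝ, qpoly (Bmat (Plot a b)) s x = qbin a b t x +
      4 * (2 * x - ((a : ℝ) * b)⁻¹ * ((1 + 2 * x) * (1 + 3 * x))) := by
  obtain ⟨e⟩ : Nonempty (Plot a b ↪ Fin t) := by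
    apply Function.Embedding.nonempty_of_card_le
    simpa using ht
  obtain ⟨u, hu⟩ : ∃ u : Plot a b, u = (⟨0, by omega⟩, ⟨0, by omega⟩) := ⟨_, rfl⟩
  obtain ⟨v, hv⟩ : ∃ v : Plot a b, v = (⟨0, by omega⟩, ⟨1, by omega⟩) := ⟨_, rfl⟩
  obtain ⟨u', hu'⟩ : ∃ u : Plot a b, u = (⟨a-1, by omega⟩, ⟨b-1, by omega⟩) := ⟨_, rfl⟩
  obtain ⟨v', hv'⟩ : ∃ v : Plot a b, v = (⟨a-1, by omega⟩, ⟨b-2, by omega⟩) := ⟨_, rfl⟩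
  have d1 : u ≠ v := by rw [hu, hv]; simp
  have d2 : u ≠ u' := by rw [hu, hu']; simp [Fin.ext_iff]; omega
  have d3 : u ≠ v' := by rw [hu, hv']; simp [Fin.ext_iff]; omega
  have d4 : v ≠ u' := by rw [hv, hu']; simp [Fin.ext_iff]; omega
  have d5 : v ≠ v' := by rw [hv, hv']; simp [Fin.ext_iff]; omega
  have d6 : u' ≠ v' := by rw [hu', hv']; simp [Fin.ext_iff]; omega
  have n1 : Neighbor u v := by rw [hu, hv]; simp [Neighbor]
  have n2 : Neighbor u' v' := by rw [hu', hv']; simp [Neighbor]; omega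
  have c1 : IsCorner u := by rw [hu]; simp [IsCorner]
  have c2 : IsCorner u' := by rw [hu']; simp [IsCorner]; omega
  refine ⟨fun q => e (if q = v then u else if q = v' then u' else q), fun x => ?_⟩
  rw [qpoly_eq (by omega) (by omega) ht]
  congr 1
  rw [← Fintype.sum_prod_type' (f := fun q r => if q ≠ r ∧ e (if q = v then u else if q = v' then u' else q)
    = e (if r = v then u else if r = v' then u' else r) then KK x q r else 0), ← Finset.sum_filter]
  have hS : (Finset.univ.filter fun z : Plot a b × Plot a b => z.1 ≠ z.2 ∧
      e (if z.1 = v then u else if z.1 = v' then u' else z.1)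
        = e (if z.2 = v then u else if z.2 = v' then u' else z.2)) =
      {(u, v), (v, u), (u', v'), (v', u')} := by
    ext ⟨q, r⟩
    simp only [Finset.mem_filter, Finset.mem_univ, true_and, e.injective.eq_iff, Finset.mem_insert,
      Finset.mem_singleton, Prod.mk.injEq]
    grind
  rw [hS, Finset.sum_insert, Finset.sum_insert, Finset.sum_insert, Finset.sum_singleton]
  · rw [KK_zero ha hb x u v n1 (Or.inl c1), KK_zero ha hb x v u ((Neighbor_symm _ _).1 n1) (Or.inr c1),
      KK_zero ha hb x u' v' n2 (Or.inl c2), KK_zero ha hb x v' u' ((Neighbor_symm _ _).1 n2) (Or.inr c2)]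
    ring
  all_goals simp only [Finset.mem_insert, Finset.mem_singleton, Prod.mk.injEq]; grind

lemma exists_bin (ha : 3 ≤ a) (hb : 3 ≤ b) (ht : a * b ≤ t) :
    ∃ s : BlockArray a b t, ∀ x : ℝ, qpoly (Bmat (Plot a b)) s x = qbin a b t x := by
  obtain ⟨e⟩ : Nonempty (Plot a b ↪ Fin t) := by
    apply Function.Embedding.nonempty_of_card_le
    simpa using ht
  refine ⟨e, fun x => ?_⟩
  rw [qpoly_eq (by omega) (by omega) ht]
  have : ∀ q r : Plot a b, ¬ (q ≠ r ∧ e q = e r) := fun q r h => h.1 (e.injective h.2)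
  simp only [this, if_false]
  simp

lemma le_rfun (s : BlockArray a b t) (W : Matrix (Plot a b) (Plot a b) ℝ) (x : ℝ) :
    qpoly W s x ≤ rfun t W x :=
  le_csSup (Set.finite_range _).bddAbove ⟨s, rfl⟩

/-- Theorem, case `a ≥ 3`. -/
theorem optimality_t_ge_p_a_ge_three
    (a b t : ℕ) (ha : 3 ≤ a) (hab : a ≤ b) (ht : a * b ≤ t)
    (xstar ystar : ℝ)
    (hx : xstar = ((2 * ((a : ℝ) * b) - 5) -
        Real.sqrt ((2 * ((a : ℝ) * b) - 5) ^ 2 - 24)) / 12)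
    (hy : ystar = ((a : ℝ) * b) - (((a : ℝ) * b) + 2) / ((a : ℝ) * b) +
        2 * ((2 * (a : ℝ) + 2 * b - 5) / ((a : ℝ) * b) - 2) * xstar +
        (eta a b t - (16 * ((a : ℝ) * b) - 14 * a - 14 * b + 20) / ((a : ℝ) * b)) *
          xstar ^ 2) :
    (∀ s : BlockArray a b t,
       qpoly (Bmat (Plot a b)) s xstar ≤ ystar ∧
       (qpoly (Bmat (Plot a b)) s xstar = ystar ↔
         s ∈ Qset a b t 0 ∪ Qset a b t 1 ∪ Qset a b t 2 ∪ Qset a b t 3 ∪ Qset a b t 4)) ∧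
    (∀ x : ℝ, x ≠ xstar → ystar < rfun t (Bmat (Plot a b)) x) := by
  have hb : 3 ≤ b := by omega
  have ha' : (3:ℝ) ≤ a := by exact_mod_cast ha
  have hb' : (3:ℝ) ≤ b := by exact_mod_cast hb
  have hP : (9:ℝ) ≤ (a:ℝ) * b := by nlinarith
  obtain ⟨hx0, hx1, hx2⟩ := xstar_facts _ xstar hP hx
  have hk := kappa_zero _ xstar hP hx2
  have hyb : ystar = qbin a b t xstar := by
    rw [hy]
    unfold qbin
    have : ((a:ℝ) * b)⁻¹ * ((a:ℝ) * b) = 1 := inv_mul_cancel₀ (by positivity)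
    simp only [div_eq_mul_inv]
    linear_combination 2 * hk
      + (8 * xstar - 1) * this
  constructor
  · intro s
    rw [hyb, qpoly_eq (by omega) (by omega) ht, mem_Q_iff ha hb]
    have hle : ∀ q r : Plot a b, (if q ≠ r ∧ s q = s r then KK xstar q r else 0) ≤ 0 := by
      intro q r
      split_ifs
      · by_cases h : Neighbor q r ∧ (IsCorner q ∨ IsCorner r)
        · rw [KK_zero ha hb xstar q r h.1 h.2, hk]
        · exact (KK_neg ha hb hP xstar hx0 hx1 hx2 q r h).le
      · exact le_rfl
    refine ⟨?_, ?_⟩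
    · have := Finset.sum_nonpos (fun q (_ : q ∈ Finset.univ) =>
        Finset.sum_nonpos (fun r (_ : r ∈ (Finset.univ : Finset (Plot a b))) => hle q r))
      linarith
    · rw [add_eq_left, Finset.sum_eq_zero_iff_of_nonpos
        (fun q _ => Finset.sum_nonpos (fun r _ => hle q r))]
      constructor
      · intro h q r hqr hs
        have h1 := h q (Finset.mem_univ _)
        rw [Finset.sum_eq_zero_iff_of_nonpos (fun r _ => hle q r)] at h1
        have h2 := h1 r (Finset.mem_univ _)
        rw [if_pos ⟨hqr, hs⟩] at h2
        by_contra hc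
        have := KK_neg ha hb hP xstar hx0 hx1 hx2 q r hc
        linarith
      · intro h q _
        refine Finset.sum_eq_zero fun r _ => ?_
        split_ifs with hc
        · have := h q r hc.1 hc.2
          rw [KK_zero ha hb xstar q r this.1 this.2, hk]
        · rfl
  · intro x hxne
    obtain ⟨c1, c2, c3⟩ := c11_bounds ha hb ht
    have hPi : 0 < ((a:ℝ) * b)⁻¹ := by positivity
    have hP1 : ((a:ℝ) * b)⁻¹ * ((a:ℝ) * b) = 1 := inv_mul_cancel₀ (by positivity)
    rcases lt_or_gt_of_ne hxne with hlt | hgt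
    · obtain ⟨s, hs⟩ := exists_bin ha hb ht
      refine lt_of_lt_of_le ?_ (le_rfun s _ x)
      rw [hs, hyb]
      unfold qbin
      set c := eta a b t - (16 * ((a:ℝ) * b) - 14 * a - 14 * b + 8) / ((a : ℝ) * b)
      set S := 4 * ((a:ℝ) * b) - 2 * a - 2 * b
      have hc0 : 0 ≤ c := le_trans (by positivity) c1
      have hxi : xstar < ((a:ℝ) * b)⁻¹ := by
        rw [← one_div, lt_div_iff₀ (by linarith)]; exact hx1
      have h1 : c * (x + xstar) ≤ c * (2 * xstar) := by gcongr; linarith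
      have h2 : c * (2 * xstar) ≤ S * (2 * xstar) := by gcongr
      have h3 : S * (2 * xstar) < S * (2 * ((a:ℝ) * b)⁻¹) := by gcongr
      have h4 : 0 < (xstar - x) * (2 * S * ((a:ℝ) * b)⁻¹ - c * (x + xstar)) :=
        mul_pos (by linarith) (by linarith)
      simp only [div_eq_mul_inv]
      linarith
    · obtain ⟨s, hs⟩ := exists_two ha hb ht
      refine lt_of_lt_of_le ?_ (le_rfun s _ x)
      have hyb' : ystar = qbin a b t xstar +
          4 * (2 * xstar - ((a : ℝ) * b)⁻¹ * ((1 + 2 * xstar) * (1 + 3 * xstar))) := by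
        rw [hk, hyb]; ring
      rw [hs, hyb']
      unfold qbin
      set c := eta a b t - (16 * ((a:ℝ) * b) - 14 * a - 14 * b + 8) / ((a : ℝ) * b)
      simp only [div_eq_mul_inv] at c1 ⊢
      set I := ((a:ℝ) * b)⁻¹
      have h1 : 0 ≤ (c - 24 * I) * (x + xstar) := mul_nonneg (by linarith) (by linarith)
      have h2 : 0 < I * (4 * a + 4 * b - 20) := mul_pos hPi (by linarith)
      have h4 : 0 < (x - xstar) * ((c - 24 * I) * (x + xstar) + I * (4 * a + 4 * b - 20)) :=
        mul_pos (by linarith) (by linarith)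
      have h5 : (x - xstar) * (8 * (I * ((a:ℝ) * b))) = (x - xstar) * 8 := by rw [hP1]; ring
      linarith

end TwoDim
end

section
/- Assume a = b = 2 and t ≥ p = 4. Then: (i) q_s(1/2) ≤ 2 for every block array s, with equality if and only if s ∈ Q₀ ∪ Q₁* ∪ Q₂*; and (ii) for every real x ≠ 1/2, max_{s∈S} q_s(x) > 2. (That is, x* = 1/2, y* = 2 and Q = Q₀ ∪ Q₁* ∪ Q₂*.) -/
open Matrix

namespace TwoDim

variable {a b t : ℕ}

/-- Equality pattern of the block array. -/
def Emat {t : ℕ} (s : BlockArray 2 2 t) : Matrix (Plot 2 2) (Plot 2 2) ℝ :=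
  Matrix.of fun q r => if s q = s r then 1 else 0

lemma Tmat_mul_transpose {t : ℕ} (s : BlockArray 2 2 t) : Tmat s * (Tmat s)ᵀ = Emat s := by
  ext q r
  simp [Matrix.mul_apply, Tmat, Emat, eq_comm]

lemma Tmat_rowsum {t : ℕ} (s : BlockArray 2 2 t) (q : Plot 2 2) : ∑ k, Tmat s q k = 1 := by
  simp [Tmat]

lemma Fmat_rowsum {t : ℕ} (s : BlockArray 2 2 t) (q : Plot 2 2) : ∑ k, Fmat s q k = 2 := by
  simp only [Fmat, Matrix.mul_apply]
  rw [Finset.sum_comm]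
  simp only [← Finset.mul_sum, Tmat_rowsum]
  obtain ⟨i, j⟩ := q
  fin_cases i <;> fin_cases j <;>
    norm_num [-Finset.sum_boole, Mmat, Neighbor, Fintype.sum_prod_type, Fin.sum_univ_two]

lemma trace_B {t : ℕ} (X Y : Matrix (Plot 2 2) (Fin t) ℝ) (c : ℝ)
    (hY : ∀ q, ∑ k, Y q k = c) :
    Matrix.trace (Bmat (Fin t) * (Xᵀ * Bmat (Plot 2 2) * Y)) =
      Matrix.trace (Bmat (Plot 2 2) * (Y * Xᵀ)) := by
  have h0 : Bmat (Plot 2 2) * (Y * Jmat (Fin t)) = 0 := by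
    ext q k
    simp only [Matrix.mul_apply, Jmat, Matrix.of_apply, mul_one, hY]
    obtain ⟨i, j⟩ := q
    fin_cases i <;> fin_cases j <;>
      simp [Bmat, Jmat, Fintype.sum_prod_type, Fin.sum_univ_two, Matrix.one_apply] <;> ring
  have h1 : Matrix.trace (Jmat (Fin t) * (Xᵀ * Bmat (Plot 2 2) * Y)) = 0 := by
    rw [Matrix.trace_mul_comm, Matrix.mul_assoc, Matrix.mul_assoc, h0]
    simp
  rw [Bmat, sub_mul, one_mul, Matrix.trace_sub, Matrix.smul_mul, Matrix.trace_smul, h1,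
    smul_zero, sub_zero, Matrix.mul_assoc, Matrix.trace_mul_comm, Matrix.mul_assoc]

lemma qpoly_eq_s17 {t : ℕ} (s : BlockArray 2 2 t) (x : ℝ) :
    qpoly (Bmat (Plot 2 2)) s x = 4 * (3 / 4 - x + x ^ 2)
      + 2 * (x - 1 / 4 - x ^ 2) *
        ((if s (0, 0) = s (0, 1) then 1 else 0) + (if s (0, 0) = s (1, 0) then 1 else 0)
         + (if s (1, 1) = s (0, 1) then 1 else 0) + (if s (1, 1) = s (1, 0) then 1 else 0))
      + 2 * (x ^ 2 - x - 1 / 4) *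
        ((if s (0, 0) = s (1, 1) then 1 else 0) + (if s (0, 1) = s (1, 0) then 1 else 0)) := by
  have e0 : cs00 (Bmat (Plot 2 2)) s = Matrix.trace (Bmat (Plot 2 2) * Emat s) := by
    rw [cs00, Cs00, trace_B _ _ 1 (Tmat_rowsum s), Tmat_mul_transpose]
  have e1 : cs01 (Bmat (Plot 2 2)) s =
      Matrix.trace (Bmat (Plot 2 2) * (Mmat 2 2 * Emat s)) := by
    rw [cs01, Cs01, trace_B _ _ 2 (Fmat_rowsum s), Fmat, Matrix.mul_assoc, Tmat_mul_transpose]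
  have e2 : cs11 (Bmat (Plot 2 2)) s =
      Matrix.trace (Bmat (Plot 2 2) * (Mmat 2 2 * (Emat s * (Mmat 2 2)ᵀ))) := by
    rw [cs11, Cs11, trace_B _ _ 2 (Fmat_rowsum s), Fmat, Matrix.transpose_mul,
      ← Tmat_mul_transpose]
    simp only [Matrix.mul_assoc]
  rw [qpoly, e0, e1, e2]
  have c1 : (if s (0, 1) = s (0, 0) then (1 : ℝ) else 0) = if s (0, 0) = s (0, 1) then 1 else 0 := by
    simp only [eq_comm]
  have c2 : (if s (1, 0) = s (0, 0) then (1 : ℝ) else 0) = if s (0, 0) = s (1, 0) then 1 else 0 := by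
    simp only [eq_comm]
  have c3 : (if s (0, 1) = s (1, 1) then (1 : ℝ) else 0) = if s (1, 1) = s (0, 1) then 1 else 0 := by
    simp only [eq_comm]
  have c4 : (if s (1, 0) = s (1, 1) then (1 : ℝ) else 0) = if s (1, 1) = s (1, 0) then 1 else 0 := by
    simp only [eq_comm]
  have c5 : (if s (1, 1) = s (0, 0) then (1 : ℝ) else 0) = if s (0, 0) = s (1, 1) then 1 else 0 := by
    simp only [eq_comm]
  have c6 : (if s (1, 0) = s (0, 1) then (1 : ℝ) else 0) = if s (0, 1) = s (1, 0) then 1 else 0 := by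
    simp only [eq_comm]
  simp [-mul_ite, -ite_mul, -mul_boole, Matrix.trace, Matrix.mul_apply, Fintype.sum_prod_type, Fin.sum_univ_two, Emat, Mmat,
    Neighbor, Bmat, Jmat, Matrix.one_apply, c1, c2, c3, c4, c5, c6]
  ring

lemma corner (q : Plot 2 2) : IsCorner q := by
  obtain ⟨i, j⟩ := q
  fin_cases i <;> fin_cases j <;> simp [IsCorner]

/-- No antipodal pair of plots carries the same treatment. -/
def Good {t : ℕ} (s : BlockArray 2 2 t) : Prop := s (0, 0) ≠ s (1, 1) ∧ s (0, 1) ≠ s (1, 0)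

lemma good_neighbor {t : ℕ} (s : BlockArray 2 2 t) (h : Good s) (u v : Plot 2 2) (huv : u ≠ v)
    (e : s u = s v) : Neighbor u v := by
  obtain ⟨h1, h2⟩ := h
  obtain ⟨i, j⟩ := u
  obtain ⟨k, l⟩ := v
  fin_cases i <;> fin_cases j <;> fin_cases k <;> fin_cases l <;>
    simp_all [Neighbor]

lemma no_triangle : ∀ u v w : Plot 2 2, Neighbor u v → Neighbor u w → ¬ Neighbor v w := by
  decide

lemma neighbor_diag : ∀ u v : Plot 2 2, Neighbor u v →
    u = (0, 0) ∨ u = (1, 1) ∨ v = (0, 0) ∨ v = (1, 1) := by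
  decide

lemma good_of {t : ℕ} (s : BlockArray 2 2 t)
    (h : ∀ k : Fin t, ¬ Significant s k → f0 s k ≤ 1) (p q : Plot 2 2) (hpq : p ≠ q)
    (hn : ¬ Neighbor p q) (hn' : ¬ Neighbor q p) : s p ≠ s q := by
  intro e
  have hns : ¬ Significant s (s p) := by
    rintro ⟨u, v, huv, hs, hN, -⟩
    have hp : p ∈ ({u, v} : Set (Plot 2 2)) := by rw [← hs]; simp
    have hq : q ∈ ({u, v} : Set (Plot 2 2)) := by rw [← hs]; simp [e]
    simp only [Set.mem_insert_iff, Set.mem_singleton_iff] at hp hq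
    rcases hp with rfl | rfl <;> rcases hq with rfl | rfl <;> tauto
  have h1 := h _ hns
  rw [f0, Set.ncard_le_one (Set.toFinite _)] at h1
  exact hpq (h1 p (by simp) q (by simp [e]))

lemma good_iff {t : ℕ} (s : BlockArray 2 2 t) :
    s ∈ Qset 2 2 t 0 ∪ QsetStar 2 2 t 1 ∪ QsetStar 2 2 t 2 ↔ Good s := by
  constructor
  · intro hs
    have h : ∀ k : Fin t, ¬ Significant s k → f0 s k ≤ 1 := by
      rcases hs with (hs | hs) | hs
      · exact hs.2
      · exact hs.1.2
      · exact hs.1.2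
    exact ⟨good_of s h _ _ (by decide) (by decide) (by decide),
      good_of s h _ _ (by decide) (by decide) (by decide)⟩
  · intro hg
    have hstar : ∀ k : Fin t, Significant s k → StrictSignificant s k := by
      rintro k ⟨u, v, h1, h2, h3, -⟩
      exact ⟨u, v, h1, h2, h3, corner u, corner v⟩
    have hle : ∀ k : Fin t, ¬ Significant s k → f0 s k ≤ 1 := by
      intro k hk
      rw [f0, Set.ncard_le_one (Set.toFinite _)]
      intro u hu v hv
      by_contra huv
      simp only [Set.mem_ofPred_eq] at hu hv
      have hN := good_neighbor s hg u v huv (hu.trans hv.symm)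
      refine hk ⟨u, v, huv, ?_, hN, Or.inl (corner u)⟩
      ext w
      simp only [Set.mem_ofPred_eq, Set.mem_insert_iff, Set.mem_singleton_iff]
      constructor
      · intro hw
        by_contra hc
        push Not at hc
        exact no_triangle u v w hN
          (good_neighbor s hg u w hc.1.symm (hu.trans hw.symm))
          (good_neighbor s hg v w hc.2.symm (hv.trans hw.symm))
      · rintro (rfl | rfl) <;> assumption
    have hcard : {k : Fin t | Significant s k}.ncard ≤ 2 := by
      have hsub : {k : Fin t | Significant s k} ⊆ {s (0, 0), s (1, 1)} := by
        rintro k ⟨u, v, -, h2, h3, -⟩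
        have hu : s u = k := by
          have : u ∈ {q : Plot 2 2 | s q = k} := by rw [h2]; simp
          exact this
        have hv : s v = k := by
          have : v ∈ {q : Plot 2 2 | s q = k} := by rw [h2]; simp
          exact this
        rcases neighbor_diag u v h3 with rfl | rfl | rfl | rfl <;> simp [hu, hv]
      exact (Set.ncard_le_ncard hsub (Set.toFinite _)).trans (by
        simpa using Set.ncard_insert_le (s (0, 0)) {s (1, 1)})
    have h3 : {k : Fin t | Significant s k}.ncard = 0 ∨
        {k : Fin t | Significant s k}.ncard = 1 ∨
        {k : Fin t | Significant s k}.ncard = 2 := by omega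
    rcases h3 with h3 | h3 | h3
    · exact Or.inl (Or.inl ⟨h3, hle⟩)
    · exact Or.inl (Or.inr ⟨⟨h3, hle⟩, hstar⟩)
    · exact Or.inr ⟨⟨h3, hle⟩, hstar⟩

/-- Theorem `t=p`, case `a = b = 2`, `t ≥ 4`: `x* = 1/2`, `y* = 2` and
`Q = Q₀ ∪ Q₁* ∪ Q₂*`. -/
theorem optimality_t_ge_p_a_eq_b_eq_two
    (t : ℕ) (ht : 4 ≤ t) :
    (∀ s : BlockArray 2 2 t,
       qpoly (Bmat (Plot 2 2)) s (1 / 2 : ℝ) ≤ 2 ∧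
       (qpoly (Bmat (Plot 2 2)) s (1 / 2 : ℝ) = 2 ↔
         s ∈ Qset 2 2 t 0 ∪ QsetStar 2 2 t 1 ∪ QsetStar 2 2 t 2)) ∧
    (∀ x : ℝ, x ≠ (1 / 2 : ℝ) → (2 : ℝ) < rfun t (Bmat (Plot 2 2)) x) := by
  refine ⟨fun s => ?_, fun x hx => ?_⟩
  · rw [good_iff, qpoly_eq_s17, Good]
    by_cases h1 : s (0, 0) = s (1, 1) <;> by_cases h2 : s (0, 1) = s (1, 0) <;>
      simp only [h1, h2, if_true, if_false] <;> norm_num [h1, h2]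
  · have hb : BddAbove (Set.range fun s : BlockArray 2 2 t => qpoly (Bmat (Plot 2 2)) s x) :=
      (Set.finite_range _).bddAbove
    let s : BlockArray 2 2 t := fun q => ⟨2 * q.1.val + q.2.val, by omega⟩
    refine lt_of_lt_of_le ?_ (le_csSup hb ⟨s, rfl⟩)
    simp only [qpoly_eq_s17]
    have : 0 < (2 * x - 1) ^ 2 := by
      have : 2 * x - 1 ≠ 0 := fun h => hx (by linarith)
      positivity
    simp [s]
    nlinarith

end TwoDim
end
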